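/- Let d ∈ {1, 2, 7, 11, 19, 43, 67, 163} and K = ℚ(√−d). Then every quadratic extension L/K which is unramified at every prime ideal of O_K not dividing 3 is K-isomorphic to K(√−3) = K(ζ₃), the field obtained by adjoining to K a root of x² + 3. -/

import Mathlib

open NumberField Polynomial

/-!
Let `A = 𝓞 K` and `B = 𝓞 L`. Since `A` is principal, `B = A[θ]` with `θ² = bθ + a`, and
`D = b² + 4a = (2θ - b)²` is a square modulo `4` whose prime divisors ramify in `B`, so all divide
the prime number `q` (here `q = 3`). Removing square factors, `L = K(√x)` where `x ∣ q` and `x` is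
still a square modulo `4`. Its norm to `ℤ` divides `q²` and is a square modulo `4`; as
`q ≡ 3 [MOD 4]`, it is not `q`, so `x = u` or `x = -q u` for a unit `u` which is a square modulo
`4`. For an imaginary quadratic `K` of discriminant other than `-3`, such a unit is `1`, or `-1`
when `K = ℚ(i)`, hence a square. So `x` is a square, which is absurd, or `-q` times a square.

Class number one follows from Minkowski's bound: every prime number below it is inert.
-/

section QuadraticAlgebras

open QuadraticAlgebra

variable {R S : Type*} [CommRing R]

theorem span_range_basis_repr_one [CommRing S] [Algebra R S] {ι : Type*} [Finite ι] [Nonempty ι]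
    (v : Module.Basis ι R S) : Ideal.span (Set.range (v.repr 1)) = ⊤ := by
  have := Fintype.ofFinite ι
  set I := Ideal.span (Set.range (v.repr 1))
  have le_smul : (⊤ : Submodule R S) ≤ I • ⊤ := fun x _ ↦ by
    have : x = ∑ i, v.repr 1 i • (v i * x) := by
      simp_rw [← smul_mul_assoc, ← Finset.sum_mul, v.sum_repr, one_mul]
    rw [this]
    exact Submodule.sum_mem _ fun i _ ↦
      Submodule.smul_mem_smul (Ideal.subset_span ⟨i, rfl⟩) Submodule.mem_top
  obtain ⟨r, r_sub_one, r_smul⟩ :=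
    Submodule.exists_sub_one_mem_and_smul_eq_zero_of_fg_of_le_smul I ⊤
      (Module.finite_def.mp (.of_basis v)) le_smul
  have r_eq : r = 0 := by
    obtain ⟨i⟩ := ‹Nonempty ι›
    simpa using congr(v.repr $(r_smul (v i) Submodule.mem_top) i)
  rw [Ideal.eq_top_iff_one, ← neg_mem_iff]
  simpa [r_eq] using r_sub_one

-- Bézout coefficients for the coordinates of `1` complete `1` to a basis `1, θ`.
theorem exists_quadraticAlgebra_algEquiv [CommRing S] [Algebra R S]
    (v : Module.Basis (Fin 2) R S) :
    ∃ a b : R, Nonempty (QuadraticAlgebra R a b ≃ₐ[R] S) := by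
  obtain ⟨p, q, bezout⟩ : ∃ p q, p * v.repr 1 0 + q * v.repr 1 1 = 1 := by
    have : Set.range (v.repr 1) = {v.repr 1 0, v.repr 1 1} := by ext; simp [eq_comm]
    rw [← Ideal.mem_span_pair, ← this, span_range_basis_repr_one]
    trivial
  have one_eq : v.repr 1 0 • v 0 + v.repr 1 1 • v 1 = 1 := by
    rw [← Fin.sum_univ_two fun i ↦ v.repr 1 i • v i, v.sum_repr]
  set s := v.repr 1 0
  set t := v.repr 1 1
  obtain ⟨θ, hθ⟩ : ∃ θ, θ = p • v 1 - q • v 0 := ⟨_, rfl⟩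
  have v_zero : v 0 = p • 1 - t • θ := by
    linear_combination (norm := module) p • one_eq - bezout • v 0 + t • hθ
  have v_one : v 1 = q • 1 + s • θ := by
    linear_combination (norm := module) q • one_eq - bezout • v 1 - s • hθ
  have exists_eq (x : S) : ∃ c d : R, x = c • 1 + d • θ := by
    refine ⟨v.repr x 0 * p + v.repr x 1 * q, v.repr x 1 * s - v.repr x 0 * t, ?_⟩
    conv_lhs => rw [← v.sum_repr x, Fin.sum_univ_two, v_zero, v_one]
    module
  obtain ⟨a, b, θ_mul_θ⟩ := exists_eq (θ * θ)
  set f : QuadraticAlgebra R a b →ₐ[R] S := lift ⟨θ, θ_mul_θ⟩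
  have f_apply (z : QuadraticAlgebra R a b) : f z = z.re • 1 + z.im • θ := by
    simp [f, lift]
  refine ⟨a, b, ⟨AlgEquiv.ofBijective f ⟨?_, fun x ↦ ?_⟩⟩⟩
  · refine (injective_iff_map_eq_zero f).mpr fun z hz ↦ ?_
    have repr_zero : z.re * s - z.im * q = 0 := by
      simpa [f_apply, hθ, sub_eq_add_neg] using congr(v.repr $hz 0)
    have repr_one : z.re * t + z.im * p = 0 := by
      simpa [f_apply, hθ] using congr(v.repr $hz 1)
    ext <;> simp only [re_zero, im_zero]
    · linear_combination p * repr_zero + q * repr_one - z.re * bezout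
    · linear_combination s * repr_one - t * repr_zero - z.im * bezout
  · obtain ⟨c, d, rfl⟩ := exists_eq x
    exact ⟨⟨c, d⟩, f_apply _⟩

theorem discr_quadraticAlgebra_basis (a b : R) :
    Algebra.discr R (QuadraticAlgebra.basis a b) = b ^ 2 + 4 * a := by
  have basis_zero : QuadraticAlgebra.basis a b 0 = 1 := by
    ext <;> simp [QuadraticAlgebra.basis]
  have basis_one : QuadraticAlgebra.basis a b 1 = ω := by
    ext <;> simp [QuadraticAlgebra.basis]
  have trace_eq (z : QuadraticAlgebra R a b) : Algebra.trace R _ z = 2 * z.re + b * z.im := by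
    rw [Algebra.trace_eq_matrix_trace (QuadraticAlgebra.basis a b), Matrix.trace_fin_two]
    simp only [Algebra.leftMulMatrix_eq_repr_mul, basis_zero, basis_one, mul_one, basis_repr_apply,
      Matrix.cons_val_zero, Matrix.cons_val_one, Matrix.cons_val_fin_one, im_mul, omega_re,
      omega_im]
    ring
  rw [Algebra.discr_def, Matrix.det_fin_two]
  simp only [Algebra.traceMatrix_apply, Algebra.traceForm_apply, trace_eq, basis_zero, basis_one,
    re_one, im_one, re_mul, im_mul, omega_re, omega_im]
  ring

theorem exists_sq_sub_dvd_of_dvd_two {p : R} (hp : Prime p) [Finite (R ⧸ Ideal.span {p})]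
    (hp2 : p ∣ 2) (a : R) : ∃ c, p ∣ a - c ^ 2 := by
  have isPrime : (Ideal.span {p}).IsPrime := (Ideal.span_singleton_prime hp.ne_zero).mpr hp
  have : CharP (R ⧸ Ideal.span {p}) 2 := CharTwo.of_one_ne_zero_of_two_eq_zero one_ne_zero <|
    (map_ofNat (Ideal.Quotient.mk _) 2).symm.trans
      (Ideal.Quotient.eq_zero_iff_dvd p 2 |>.mpr hp2)
  obtain ⟨c, hc⟩ := Finite.surjective_of_injective (frobenius_inj (R ⧸ Ideal.span {p}) 2) a
  obtain ⟨c, rfl⟩ := Ideal.Quotient.mk_surjective c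
  refine ⟨c, (Ideal.Quotient.eq_zero_iff_dvd _ _).mp ?_⟩
  rw [map_sub, map_pow, sub_eq_zero]
  exact hc.symm

-- If `p` divides the discriminant then it divides the square of some `z` it does not divide:
-- `z = 2ω - b` when `p ∤ 2`, and `z = ω - c` with `c² ≡ a` modulo `p` when `p ∣ 2`.
theorem not_dvd_discr_of_isRadical_algebraMap {a b p : R} (hp : Prime p)
    [Finite (R ⧸ Ideal.span {p})]
    (radical : IsRadical (algebraMap R (QuadraticAlgebra R a b) p)) : ¬p ∣ b ^ 2 + 4 * a := by
  intro dvd_discr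
  have dvd_im_of_sq_eq {z w : QuadraticAlgebra R a b} (h : z ^ 2 = algebraMap R _ p * w) :
      p ∣ z.im :=
    (algebraMap_dvd_iff.mp (radical 2 z ⟨w, h⟩)).2
  by_cases hp2 : p ∣ 2
  · obtain ⟨l, hl⟩ : p ∣ b := hp.dvd_of_dvd_pow (n := 2) <|
      (dvd_add_left (hp2.trans ⟨2 * a, by ring⟩)).mp dvd_discr
    obtain ⟨c, k, hk⟩ := exists_sq_sub_dvd_of_dvd_two hp hp2 a
    obtain ⟨t, ht⟩ := hp2
    refine hp.not_isUnit <| isUnit_of_dvd_one <|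
      dvd_im_of_sq_eq (z := ⟨-c, 1⟩) (w := ⟨k + t * c ^ 2, l - t * c⟩) ?_
    ext <;> simp only [sq, re_mul, im_mul, algebraMap_re, algebraMap_im]
    · linear_combination hk + c ^ 2 * ht
    · linear_combination hl - c * ht
  · obtain ⟨k, hk⟩ := dvd_discr
    refine hp2 (dvd_im_of_sq_eq (z := ⟨-b, 2⟩) (w := ⟨k, 0⟩) ?_)
    ext <;> simp only [sq, re_mul, im_mul, algebraMap_re, algebraMap_im]
    · linear_combination hk
    · ring

end QuadraticAlgebras

/-- The ring extension `B` of `A` is unramified at every nonzero prime ideal of `A` that does not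
contain `m`, in the sense that every prime of `B` above it has ramification index `1`. -/
def IsUnramifiedAwayFrom (A B : Type*) [CommRing A] [CommRing B] [Algebra A B] (m : A) : Prop :=
  ∀ P : Ideal A, P.IsPrime → P ≠ ⊥ → m ∉ P →
    ∀ Q : Ideal B, Q.IsPrime → Q.comap (algebraMap A B) = P → Ideal.ramificationIdx' P Q = 1

theorem IsUnramifiedAwayFrom.isRadical_algebraMap {A B : Type*} [CommRing A] [Ring.DimensionLEOne A]
    [CommRing B] [IsDedekindDomain B] [Algebra A B] [FaithfulSMul A B] {m p : A}
    (unramified : IsUnramifiedAwayFrom A B m) (hp : Prime p) (not_dvd : ¬p ∣ m) :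
    IsRadical (algebraMap A B p) := by
  have isPrime : (Ideal.span {p}).IsPrime := (Ideal.span_singleton_prime hp.ne_zero).mpr hp
  have ne_bot : Ideal.span {p} ≠ ⊥ := by simpa using hp.ne_zero
  have map_ne_zero : algebraMap A B p ≠ 0 := by simpa using hp.ne_zero
  have squarefree : Squarefree (Ideal.span {algebraMap A B p}) := by
    refine (squarefree_iff_irreducible_sq_not_dvd_of_ne_zero (by simpa using map_ne_zero)).mpr
      fun Q hQ sq_dvd ↦ ?_
    have Q_isPrime : Q.IsPrime := Ideal.isPrime_of_prime hQ.prime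
    have le_comap : Ideal.span {p} ≤ Q.comap (algebraMap A B) := by
      rw [Ideal.span_singleton_le_iff_mem, Ideal.mem_comap, ← Ideal.dvd_span_singleton]
      exact (dvd_mul_right Q Q).trans sq_dvd
    have comap_eq : Ideal.span {p} = Q.comap (algebraMap A B) :=
      (isPrime.isMaximal ne_bot).eq_of_le (Q_isPrime.comap _).ne_top le_comap
    refine (Ideal.ramificationIdx'_ne_one_iff (Ideal.map_le_iff_le_comap.mpr le_comap)).mpr ?_
      (unramified _ isPrime ne_bot (by rwa [Ideal.mem_span_singleton]) Q Q_isPrime comap_eq.symm)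
    rw [sq, Ideal.map_span, Set.image_singleton]
    exact Ideal.le_of_dvd sq_dvd
  intro n x dvd_pow
  rw [← Ideal.mem_span_singleton, ← Ideal.dvd_span_singleton] at dvd_pow ⊢
  rw [← Ideal.span_singleton_pow] at dvd_pow
  exact squarefree.isRadical n _ dvd_pow

section SquareMod

variable {R : Type*} [CommRing R]

/-- `x` is congruent to a square modulo `m`. -/
def IsSquareMod (m x : R) : Prop :=
  ∃ c, m ∣ x - c ^ 2

theorem IsSquareMod.map {R S F : Type*} [CommRing R] [CommRing S] [FunLike F R S]
    [RingHomClass F R S] {m x : R} (h : IsSquareMod m x) (f : F) : IsSquareMod (f m) (f x) := by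
  obtain ⟨c, hc⟩ := h
  exact ⟨f c, by simpa using map_dvd f hc⟩

theorem exists_sq_mul_squarefree [WfDvdMonoid R] {x : R} (hx : x ≠ 0) :
    ∃ f y, x = f ^ 2 * y ∧ Squarefree y := by
  induction x using (IsWellFounded.wf (r := DvdNotUnit (α := R))).induction with
  | h x ih =>
    by_cases squarefree : Squarefree x
    · exact ⟨1, x, by simp, squarefree⟩
    · obtain ⟨g, ⟨w, rfl⟩, hg⟩ : ∃ g, g * g ∣ x ∧ ¬IsUnit g := by
        simpa [Squarefree] using squarefree
      have hw : w ≠ 0 := right_ne_zero_of_mul hx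
      obtain ⟨f, y, rfl, hy⟩ :=
        ih w ⟨hw, g * g, fun h ↦ hg (isUnit_of_mul_isUnit_left h), mul_comm _ _⟩ hw
      exact ⟨g * f, y, by ring, hy⟩

theorem dvd_of_squarefree_of_forall_prime_dvd [IsDomain R] [UniqueFactorizationMonoid R]
    {x y : R} (hx : Squarefree x) (h : ∀ p, Prime p → p ∣ x → p ∣ y) : x ∣ y := by
  by_cases hy : y = 0
  · simp [hy]
  classical
  let _ : StrongNormalizationMonoid R := UniqueFactorizationMonoid.strongNormalizationMonoid
  rw [UniqueFactorizationMonoid.dvd_iff_normalizedFactors_le_normalizedFactors hx.ne_zero hy,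
    Multiset.le_iff_subset
      ((UniqueFactorizationMonoid.squarefree_iff_nodup_normalizedFactors hx.ne_zero).mp hx)]
  intro p hp
  have prime := UniqueFactorizationMonoid.prime_of_normalized_factor p hp
  exact (UniqueFactorizationMonoid.mem_normalizedFactors_iff' hy).mpr
    ⟨prime.irreducible, UniqueFactorizationMonoid.normalize_normalized_factor p hp,
      h p prime (UniqueFactorizationMonoid.dvd_of_mem_normalizedFactors hp)⟩

theorem exists_sq_mul_dvd_isSquareMod_four [IsDomain R] [IsPrincipalIdealRing R] {D m : R}
    (hD : D ≠ 0) (isSquareMod : IsSquareMod 4 D) (coprime : IsCoprime 2 m)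
    (dvd_of_prime : ∀ p, Prime p → p ∣ D → p ∣ m) :
    ∃ f x, D = f ^ 2 * x ∧ x ∣ m ∧ IsSquareMod 4 x := by
  obtain ⟨f, x, rfl, squarefree⟩ := exists_sq_mul_squarefree hD
  have coprime_four : IsCoprime f 4 := by
    refine isCoprime_of_prime_dvd (by rintro ⟨rfl, -⟩; simp at hD) fun p hp dvd_f dvd_four ↦ ?_
    have dvd_two : p ∣ 2 := hp.dvd_of_dvd_pow (n := 2) (by convert dvd_four; norm_num)
    exact hp.not_isUnit (coprime.isUnit_of_dvd' dvd_two
      (dvd_of_prime p hp ((dvd_pow dvd_f two_ne_zero).mul_right x)))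
  refine ⟨f, x, rfl, dvd_of_squarefree_of_forall_prime_dvd squarefree fun p hp dvd ↦
    dvd_of_prime p hp (dvd.mul_left _), ?_⟩
  obtain ⟨g, h, bezout⟩ := coprime_four
  obtain ⟨c, k, hk⟩ := isSquareMod
  exact ⟨g * c, h * x * (1 + g * f) + g ^ 2 * k, by
    linear_combination (-x * (1 + g * f)) * bezout + g ^ 2 * hk⟩

end SquareMod

open QuadraticAlgebra in
theorem exists_sqrt_discr {A B : Type*} [CommRing A] [IsDomain A] [CommRing B] [Algebra A B]
    [Module.Free A B] [Module.Finite A B] (rank : Module.finrank A B = 2)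
    (two_ne_zero : (2 : A) ≠ 0) :
    ∃ (D : A) (δ : B), δ ^ 2 = algebraMap A B D ∧ δ ∉ Set.range (algebraMap A B) ∧
      IsSquareMod 4 D ∧ ∀ p, Prime p → Finite (A ⧸ Ideal.span {p}) →
        IsRadical (algebraMap A B p) → ¬p ∣ D := by
  obtain ⟨a, b, ⟨e⟩⟩ := exists_quadraticAlgebra_algEquiv (Module.finBasisOfFinrankEq A B rank)
  have sq_eq : (⟨-b, 2⟩ : QuadraticAlgebra A a b) ^ 2 = algebraMap A _ (b ^ 2 + 4 * a) := by
    ext <;> simp only [sq, re_mul, im_mul, algebraMap_re, algebraMap_im] <;> ring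
  refine ⟨b ^ 2 + 4 * a, e ⟨-b, 2⟩, ?_, ?_, ⟨b, a, by ring⟩, fun p hp _ radical ↦ ?_⟩
  · rw [← map_pow, sq_eq, e.commutes]
  · rintro ⟨c, hc⟩
    rw [← e.commutes, e.injective.eq_iff] at hc
    exact two_ne_zero (by simpa using congr(im $hc).symm)
  · refine not_dvd_discr_of_isRadical_algebraMap hp fun n z dvd_pow ↦ ?_
    rw [← map_dvd_iff e, e.commutes] at dvd_pow ⊢
    exact radical n _ (by rwa [← map_pow])

theorem exists_sqrt_dvd_of_isUnramifiedAwayFrom {K L : Type*} [Field K] [NumberField K]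
    [IsPrincipalIdealRing (𝓞 K)] [Field L] [NumberField L] [Algebra K L]
    (deg : Module.finrank K L = 2) {m : 𝓞 K} (coprime : IsCoprime 2 m)
    (unramified : IsUnramifiedAwayFrom (𝓞 K) (𝓞 L) m) :
    ∃ (x : 𝓞 K) (r : L), r ^ 2 = algebraMap K L x ∧ r ∉ Set.range (algebraMap K L) ∧
      x ∣ m ∧ IsSquareMod 4 x := by
  have rank : Module.finrank (𝓞 K) (𝓞 L) = 2 := by
    rw [← deg, ← IsFractionRing.finrank_eq (𝓞 K) K (𝓞 L) L]
  obtain ⟨D, δ, δ_sq, δ_notMem, isSquareMod, not_dvd⟩ := exists_sqrt_discr rank two_ne_zero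
  have D_ne_zero : D ≠ 0 := by
    rintro rfl
    exact δ_notMem ⟨0, by simpa [eq_comm] using δ_sq⟩
  have dvd_of_prime (p : 𝓞 K) (hp : Prime p) (dvd : p ∣ D) : p ∣ m := by
    by_contra not_dvd_m
    exact not_dvd p hp (Ideal.finiteQuotientOfFreeOfNeBot _ (by simpa using hp.ne_zero))
      (unramified.isRadical_algebraMap hp not_dvd_m) dvd
  obtain ⟨f, x, rfl, x_dvd, x_isSquareMod⟩ :=
    exists_sq_mul_dvd_isSquareMod_four D_ne_zero isSquareMod coprime dvd_of_prime
  have f_ne_zero : algebraMap K L f ≠ 0 := by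
    have : f ≠ 0 := by rintro rfl; simp at D_ne_zero
    simpa
  refine ⟨x, δ / algebraMap K L f, ?_, ?_, x_dvd, x_isSquareMod⟩
  · rw [div_pow, div_eq_iff (pow_ne_zero 2 f_ne_zero)]
    have := congr((algebraMap (𝓞 L) L) $δ_sq)
    simp only [map_pow, map_mul] at this
    rw [this, mul_comm]
    rfl
  · rintro ⟨k, hk⟩
    have δ_eq : algebraMap K L (k * f) = δ := by rw [map_mul, hk, div_mul_cancel₀ _ f_ne_zero]
    have integral : IsIntegral ℤ (k * f : K) :=
      (isIntegral_algebraMap_iff (algebraMap K L).injective).mp (δ_eq ▸ δ.isIntegral_coe)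
    exact δ_notMem ⟨⟨k * f, integral⟩, RingOfIntegers.ext δ_eq⟩

section ImaginaryQuadratic

open QuadraticAlgebra

variable {R : Type*} [CommRing R]

theorem four_mul_norm_quadraticAlgebra {a b : R} (z : QuadraticAlgebra R a b) :
    4 * norm z = (2 * z.re + b * z.im) ^ 2 - (b ^ 2 + 4 * a) * z.im ^ 2 := by
  rw [norm_def]; ring

theorem IsSquareMod.norm {a b m : R} {z : QuadraticAlgebra R a b}
    (h : IsSquareMod (algebraMap R (QuadraticAlgebra R a b) m) z) : IsSquareMod m (norm z) := by
  obtain ⟨c, y, hy⟩ := h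
  obtain rfl := sub_eq_iff_eq_add'.mp hy
  refine ⟨QuadraticAlgebra.norm c, (c ^ 2 * star y).trace + m * QuadraticAlgebra.norm y, ?_⟩
  rw [← map_pow]
  simp only [norm_def, trace_def, sq, re_add, im_add, re_mul, im_mul, algebraMap_re, algebraMap_im,
    re_star, im_star]
  ring

theorem not_prime_two_of_isSquareMod_four_neg_one [IsDomain R] (h : IsSquareMod 4 (-1 : R)) :
    ¬Prime (2 : R) := by
  intro prime
  obtain ⟨c, y, hy⟩ := h
  obtain ⟨w, hw⟩ : 2 ∣ c + 1 :=
    prime.dvd_of_dvd_pow (n := 2) ⟨c - 2 * y, by linear_combination -hy⟩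
  refine prime.not_isUnit (.of_mul_eq_one (w - w ^ 2 - y) (mul_left_cancel₀ prime.ne_zero ?_))
  linear_combination (c + 2 * w - 1) * hw + hy

variable {a b : ℤ}

theorem discr_emod_sixteen_of_isSquareMod_four_neg_one
    (h : IsSquareMod 4 (-1 : QuadraticAlgebra ℤ a b)) : (b ^ 2 + 4 * a) % 16 = 12 := by
  have residues : ∀ P q a b : ZMod 4, -1 - (P ^ 2 + a * q ^ 2) = 0 → 2 * P * q + b * q ^ 2 = 0 →
      b = 0 ∧ a - 3 = 0 ∨ b - 2 = 0 ∧ a - 2 = 0 := by decide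
  obtain ⟨c, y, hy⟩ := h
  have re_eq : -1 - (c.re ^ 2 + a * c.im ^ 2) = 4 * y.re := by
    simpa [sq, mul_assoc] using congr(re $hy)
  have im_eq : 2 * c.re * c.im + b * c.im ^ 2 = 4 * -y.im := by
    have := congr(im $hy)
    simp only [sq, im_sub, im_neg, im_one, im_mul, re_ofNat, im_ofNat] at this
    linear_combination -this
  have intCast_eq_zero_iff (n : ℤ) : (n : ZMod 4) = 0 ↔ 4 ∣ n :=
    ZMod.intCast_zmod_eq_zero_iff_dvd n 4
  have cases := residues c.re c.im a b
    (mod_cast (intCast_eq_zero_iff _).mpr ⟨_, re_eq⟩)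
    (mod_cast (intCast_eq_zero_iff _).mpr ⟨_, im_eq⟩)
  norm_cast at cases
  simp only [intCast_eq_zero_iff] at cases
  obtain ⟨⟨k, hk⟩, l, hl⟩ | ⟨⟨k, hk⟩, l, hl⟩ := cases
  · obtain rfl : b = 4 * k := hk
    ring_nf; omega
  · obtain rfl : b = 4 * k + 2 := by linear_combination hk
    ring_nf; omega

theorem norm_nonneg_of_discr_neg (neg : b ^ 2 + 4 * a < 0) (z : QuadraticAlgebra ℤ a b) :
    0 ≤ norm z := by
  nlinarith [four_mul_norm_quadraticAlgebra z, sq_nonneg (2 * z.re + b * z.im), sq_nonneg z.im]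

theorem isUnit_iff_norm_eq_one_of_discr_neg (neg : b ^ 2 + 4 * a < 0) {z : QuadraticAlgebra ℤ a b} :
    IsUnit z ↔ norm z = 1 := by
  rw [isUnit_iff_norm_isUnit, Int.isUnit_iff]
  have := norm_nonneg_of_discr_neg neg z
  omega

theorem isUnit_or_associated_of_dvd_of_isSquareMod_four (neg : b ^ 2 + 4 * a < 0) {q : ℕ}
    (hq : q.Prime) (q_mod : q % 4 = 3) {x : QuadraticAlgebra ℤ a b} (dvd : x ∣ q)
    (isSquareMod : IsSquareMod 4 x) : IsUnit x ∨ Associated x q := by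
  obtain ⟨y, hy⟩ := dvd
  have norm_mul_norm : norm x * norm y = (q : ℤ) ^ 2 := by
    rw [← map_mul, ← hy, QuadraticAlgebra.norm_natCast]
  obtain ⟨n, hn⟩ := Int.eq_ofNat_of_zero_le (norm_nonneg_of_discr_neg neg x)
  have dvd_sq : n ∣ q ^ 2 := by
    rw [hn] at norm_mul_norm
    exact_mod_cast Dvd.intro _ norm_mul_norm
  obtain ⟨i, hi, rfl⟩ := (Nat.dvd_prime_pow hq).mp dvd_sq
  interval_cases i
  · exact .inl ((isUnit_iff_norm_eq_one_of_discr_neg neg).mpr (by simpa using hn))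
  · obtain ⟨c, k, hk⟩ : IsSquareMod 4 (norm x) := .norm (by simpa using isSquareMod)
    rw [hn] at hk
    obtain ⟨d, rfl | rfl⟩ := c.even_or_odd'
    all_goals ring_nf at hk; omega
  · have norm_y : norm y = 1 := by
      refine mul_left_cancel₀ (a := (q : ℤ) ^ 2) (by simpa using hq.ne_zero) ?_
      rw [mul_one, ← Nat.cast_pow, ← hn, norm_mul_norm, hn, Nat.cast_pow]
    have isUnit_y := (isUnit_iff_norm_eq_one_of_discr_neg neg).mpr norm_y
    exact .inr (hy ▸ associated_mul_unit_right x y isUnit_y)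

theorem exists_norm_eq_two_of_not_irreducible_two (neg : b ^ 2 + 4 * a < 0)
    (h : ¬Irreducible (2 : QuadraticAlgebra ℤ a b)) :
    ∃ z : QuadraticAlgebra ℤ a b, norm z = 2 := by
  have norm_two : norm (2 : QuadraticAlgebra ℤ a b) = 4 := QuadraticAlgebra.norm_natCast 2
  simp only [irreducible_iff, isUnit_iff_norm_eq_one_of_discr_neg neg, norm_two, not_and,
    not_forall, not_or] at h
  obtain ⟨z, w, hzw, norm_z, norm_w⟩ := h (by norm_num)
  have norm_mul_norm : norm z * norm w = 4 := by rw [← map_mul, ← hzw, norm_two]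
  have norm_z_nonneg := norm_nonneg_of_discr_neg neg z
  have norm_z_le : norm z ≤ 4 := Int.le_of_dvd (by norm_num) ⟨_, norm_mul_norm.symm⟩
  refine ⟨z, ?_⟩
  interval_cases norm z <;> omega

theorem discr_eq_neg_four_of_norm_eq_two (neg : b ^ 2 + 4 * a < 0)
    (discr_mod : (b ^ 2 + 4 * a) % 16 = 12) {z : QuadraticAlgebra ℤ a b} (hz : norm z = 2) :
    b ^ 2 + 4 * a = -4 := by
  have eq := four_mul_norm_quadraticAlgebra z
  rw [hz] at eq
  generalize b ^ 2 + 4 * a = D at *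
  obtain im_eq | im_ne := eq_or_ne z.im 0
  · have : IsSquare (8 : ℤ) := ⟨2 * z.re, by rw [im_eq] at eq; linear_combination eq⟩
    norm_num at this
  · have one_le : 1 ≤ z.im ^ 2 := sq_pos_of_ne_zero im_ne
    have : -8 ≤ D := by nlinarith
    omega

theorem isSquare_neg_one_of_isSquareMod_four [IsDomain (QuadraticAlgebra ℤ a b)]
    [DecompositionMonoid (QuadraticAlgebra ℤ a b)] (neg : b ^ 2 + 4 * a < 0)
    (h : IsSquareMod 4 (-1 : QuadraticAlgebra ℤ a b)) : IsSquare (-1 : QuadraticAlgebra ℤ a b) := by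
  obtain ⟨z, hz⟩ := exists_norm_eq_two_of_not_irreducible_two neg
    fun irreducible ↦ not_prime_two_of_isSquareMod_four_neg_one h irreducible.prime
  have discr_eq :=
    discr_eq_neg_four_of_norm_eq_two neg (discr_emod_sixteen_of_isSquareMod_four_neg_one h) hz
  obtain ⟨k, rfl⟩ : Even b := by
    rw [← Int.even_pow' two_ne_zero]
    exact ⟨-2 - 2 * a, by linarith⟩
  refine ⟨⟨-k, 1⟩, ?_⟩
  ext <;> simp only [re_neg, im_neg, re_one, im_one, mk_mul_mk] <;> linarith

theorem im_eq_zero_of_isUnit_of_isSquareMod_four (neg : b ^ 2 + 4 * a < 0)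
    (ne : b ^ 2 + 4 * a ≠ -3) {u : QuadraticAlgebra ℤ a b} (hu : IsUnit u)
    (h : IsSquareMod 4 u) : u.im = 0 := by
  have norm_eq := four_mul_norm_quadraticAlgebra u
  rw [(isUnit_iff_norm_eq_one_of_discr_neg neg).mp hu] at norm_eq
  have sq_nonneg := sq_nonneg (2 * u.re + b * u.im)
  by_contra ne_zero
  obtain ⟨k, rfl | rfl⟩ := b.even_or_odd'
  · obtain ⟨c, y, hy⟩ := h
    have im_eq : u.im = 2 * (c.re * c.im + k * c.im ^ 2 + 2 * y.im) := by
      have := congr(im $hy)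
      simp only [sq, im_sub, im_mul, re_ofNat, im_ofNat] at this
      linear_combination this
    generalize c.re * c.im + k * c.im ^ 2 + 2 * y.im = n at im_eq
    have one_le : 1 ≤ n ^ 2 := sq_pos_of_ne_zero (right_ne_zero_of_mul (im_eq ▸ ne_zero))
    rw [im_eq] at norm_eq sq_nonneg
    have discr_le : (2 * k) ^ 2 + 4 * a ≤ -4 := by ring_nf at neg ⊢; omega
    nlinarith
  · have one_le : 1 ≤ u.im ^ 2 := sq_pos_of_ne_zero ne_zero
    have discr_le : (2 * k + 1) ^ 2 + 4 * a ≤ -7 := by ring_nf at neg ne ⊢; omega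
    nlinarith

theorem isSquare_of_isUnit_of_isSquareMod_four [IsDomain (QuadraticAlgebra ℤ a b)]
    [DecompositionMonoid (QuadraticAlgebra ℤ a b)] (neg : b ^ 2 + 4 * a < 0)
    (ne : b ^ 2 + 4 * a ≠ -3) {u : QuadraticAlgebra ℤ a b} (hu : IsUnit u)
    (h : IsSquareMod 4 u) : IsSquare u := by
  have im_eq := im_eq_zero_of_isUnit_of_isSquareMod_four neg ne hu h
  have norm_eq := (isUnit_iff_norm_eq_one_of_discr_neg neg).mp hu
  have eq_or : u = 1 ∨ u = -1 := by
    simpa [norm_def, im_eq, QuadraticAlgebra.ext_iff, ← sq] using norm_eq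
  obtain rfl | rfl := eq_or
  · exact .one
  · exact isSquare_neg_one_of_isSquareMod_four neg h

theorem isSquare_or_exists_eq_neg_mul_sq [IsDomain (QuadraticAlgebra ℤ a b)]
    [DecompositionMonoid (QuadraticAlgebra ℤ a b)] (neg : b ^ 2 + 4 * a < 0)
    (ne : b ^ 2 + 4 * a ≠ -3) {q : ℕ} (hq : q.Prime) (q_mod : q % 4 = 3)
    {x : QuadraticAlgebra ℤ a b} (dvd : x ∣ q) (isSquareMod : IsSquareMod 4 x) :
    IsSquare x ∨ ∃ v, x = -(q * v ^ 2) := by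
  obtain isUnit | associated :=
    isUnit_or_associated_of_dvd_of_isSquareMod_four neg hq q_mod dvd isSquareMod
  · exact .inl (isSquare_of_isUnit_of_isSquareMod_four neg ne isUnit isSquareMod)
  · obtain ⟨w, rfl⟩ := associated.symm
    obtain ⟨k, rfl⟩ : ∃ k, q = 4 * k + 3 := ⟨q / 4, by omega⟩
    have neg_w_isSquareMod : IsSquareMod 4 (-w : QuadraticAlgebra ℤ a b) := by
      obtain ⟨c, y, hy⟩ := isSquareMod
      exact ⟨c, y - (k + 1) * w, by push_cast at hy; linear_combination hy⟩
    obtain ⟨v, hv⟩ :=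
      isSquare_of_isUnit_of_isSquareMod_four neg ne w.isUnit.neg neg_w_isSquareMod
    exact .inr ⟨v, by rw [sq, ← hv, mul_neg, neg_neg]⟩

end ImaginaryQuadratic

theorem nonempty_algEquiv_adjoinRoot_X_sq_add_C {K L : Type*} [Field K] [Field L] [Algebra K L]
    (deg : Module.finrank K L = 2) {c : K} {ρ : L} (ρ_sq : ρ ^ 2 = -algebraMap K L c)
    (ρ_notMem : ρ ∉ Set.range (algebraMap K L)) :
    Nonempty (L ≃ₐ[K] AdjoinRoot ((X : K[X]) ^ 2 + C c)) := by
  have monic : ((X : K[X]) ^ 2 + C c).Monic := monic_X_pow_add_C c two_ne_zero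
  have natDegree_eq : ((X : K[X]) ^ 2 + C c).natDegree = 2 := natDegree_X_pow_add_C
  have irreducible : Irreducible ((X : K[X]) ^ 2 + C c) := by
    refine (monic.irreducible_iff_roots_eq_zero_of_degree_le_three natDegree_eq.ge
      (by omega)).mpr (Multiset.eq_zero_of_forall_notMem fun z hz ↦ ρ_notMem ?_)
    have z_sq : z ^ 2 + c = 0 := by simpa [monic.ne_zero] using hz
    have : algebraMap K L z ^ 2 = ρ ^ 2 := by
      rw [ρ_sq, ← map_pow, eq_neg_of_add_eq_zero_left z_sq, map_neg]
    obtain h | h := sq_eq_sq_iff_eq_or_eq_neg.mp this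
    · exact ⟨z, h⟩
    · exact ⟨-z, by rw [map_neg, h, neg_neg]⟩
  have := Fact.mk irreducible
  have := monic.finite_adjoinRoot
  have : FiniteDimensional K L := Module.finite_of_finrank_pos (by omega)
  let f : AdjoinRoot ((X : K[X]) ^ 2 + C c) →ₐ[K] L :=
    AdjoinRoot.liftAlgHom _ (Algebra.ofId K L) ρ (by simp [ρ_sq])
  have finrank_eq : Module.finrank K (AdjoinRoot ((X : K[X]) ^ 2 + C c)) = Module.finrank K L := by
    rw [(AdjoinRoot.powerBasis monic.ne_zero).finrank, AdjoinRoot.powerBasis_dim, natDegree_eq, deg]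
  exact ⟨(AlgEquiv.ofBijective f
    ⟨f.injective, (LinearMap.injective_iff_surjective_of_finrank_eq_finrank (f := f.toLinearMap)
      finrank_eq).mp f.injective⟩).symm⟩

section RingOfIntegers

open QuadraticAlgebra

variable {K : Type*} [Field K] [NumberField K]

theorem exists_quadraticAlgebra_algEquiv_ringOfIntegers (deg : Module.finrank ℚ K = 2) :
    ∃ a b : ℤ, b ^ 2 + 4 * a = discr K ∧ Nonempty (QuadraticAlgebra ℤ a b ≃ₐ[ℤ] 𝓞 K) := by
  obtain ⟨a, b, ⟨e⟩⟩ := exists_quadraticAlgebra_algEquiv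
    (Module.finBasisOfFinrankEq ℤ (𝓞 K) ((RingOfIntegers.rank K).trans deg))
  refine ⟨a, b, ?_, ⟨e⟩⟩
  rw [← discr_quadraticAlgebra_basis, ← NumberField.discr_eq_discr K
    ((QuadraticAlgebra.basis a b).map e.toLinearEquiv), Algebra.discr_eq_discr_of_algEquiv _ e]
  rfl

theorem isSquare_or_exists_eq_neg_mul_sq_ringOfIntegers [IsPrincipalIdealRing (𝓞 K)]
    (deg : Module.finrank ℚ K = 2) (neg : discr K < 0) (ne : discr K ≠ -3) {q : ℕ}
    (hq : q.Prime) (q_mod : q % 4 = 3) {x : 𝓞 K} (dvd : x ∣ q) (isSquareMod : IsSquareMod 4 x) :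
    IsSquare x ∨ ∃ v, x = -(q * v ^ 2) := by
  obtain ⟨a, b, discr_eq, ⟨e⟩⟩ := exists_quadraticAlgebra_algEquiv_ringOfIntegers deg
  have : IsDomain (QuadraticAlgebra ℤ a b) := e.toMulEquiv.isDomain
  have : DecompositionMonoid (QuadraticAlgebra ℤ a b) := MulEquiv.decompositionMonoid e
  obtain isSquare | ⟨v, hv⟩ := isSquare_or_exists_eq_neg_mul_sq (x := e.symm x) (discr_eq ▸ neg)
    (discr_eq ▸ ne) hq q_mod (by simpa using map_dvd e.symm dvd)
    (map_ofNat e.symm 4 ▸ isSquareMod.map e.symm)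
  · exact .inl (by simpa using isSquare.map e)
  · exact .inr ⟨e v, by simpa using congr(e $hv)⟩

end RingOfIntegers

section ClassNumberOne

open QuadraticAlgebra

-- The modulus is `4 * p` rather than `p` in order to include `p = 2`.
theorem natCast_dvd_of_dvd_norm {a b : ℤ} {p : ℕ} (hp : p.Prime)
    (h : ¬IsSquare ((b ^ 2 + 4 * a : ℤ) : ZMod (4 * p))) {z : QuadraticAlgebra ℤ a b}
    (dvd : (p : ℤ) ∣ norm z) : (p : QuadraticAlgebra ℤ a b) ∣ z := by
  have prime : Prime (p : ℤ) := Nat.prime_iff_prime_int.mp hp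
  obtain ⟨k, hk⟩ := dvd
  rw [norm_def] at hk
  have dvd_im : (p : ℤ) ∣ z.im := by
    by_contra not_dvd
    obtain ⟨t, u, bezout⟩ := prime.coprime_iff_not_dvd.mpr not_dvd
    refine h ⟨(2 * u * z.re + b : ℤ), ?_⟩
    rw [← sq, ← Int.cast_pow, ZMod.intCast_eq_intCast_iff_dvd_sub]
    refine ⟨u ^ 2 * k + u * z.re * b * t - a * t * (1 + u * z.im), ?_⟩
    push_cast
    linear_combination
      4 * u ^ 2 * hk + (4 * a * (1 + u * z.im) - 4 * u * z.re * b) * bezout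
  have dvd_re : (p : ℤ) ∣ z.re := by
    refine prime.dvd_of_dvd_pow (n := 2) ?_
    obtain ⟨l, hl⟩ := dvd_im
    exact ⟨k - b * z.re * l + a * z.im * l, by
      linear_combination hk - (b * z.re - a * z.im) * hl⟩
  obtain ⟨c, hc⟩ := dvd_re
  obtain ⟨d, hd⟩ := dvd_im
  exact ⟨⟨c, d⟩, by ext <;> simp [hc, hd]⟩

theorem prime_natCast_of_not_isSquare_discr {a b : ℤ} {p : ℕ} (hp : p.Prime)
    (h : ¬IsSquare ((b ^ 2 + 4 * a : ℤ) : ZMod (4 * p))) :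
    Prime (p : QuadraticAlgebra ℤ a b) := by
  have prime : Prime (p : ℤ) := Nat.prime_iff_prime_int.mp hp
  have norm_natCast : norm (p : QuadraticAlgebra ℤ a b) = (p : ℤ) ^ 2 :=
    QuadraticAlgebra.norm_natCast p
  refine ⟨?_, fun isUnit ↦ ?_, fun z w dvd ↦ ?_⟩
  · simpa [QuadraticAlgebra.ext_iff] using hp.ne_zero
  · rw [isUnit_iff_norm_isUnit, norm_natCast, isUnit_pow_iff two_ne_zero] at isUnit
    exact prime.not_isUnit isUnit
  · have dvd_norm_mul : (p : ℤ) ∣ norm z * norm w := by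
      rw [← map_mul]
      refine (Dvd.intro_left _ (sq (p : ℤ)).symm).trans ?_
      rw [← norm_natCast]
      exact map_dvd QuadraticAlgebra.norm dvd
    exact (prime.dvd_or_dvd dvd_norm_mul).imp (natCast_dvd_of_dvd_norm hp h)
      (natCast_dvd_of_dvd_norm hp h)

variable {K : Type*} [Field K] [NumberField K]

theorem prime_natCast_ringOfIntegers_of_not_isSquare_discr (deg : Module.finrank ℚ K = 2) {p : ℕ}
    (hp : p.Prime) (h : ¬IsSquare (discr K : ZMod (4 * p))) : Prime (p : 𝓞 K) := by
  obtain ⟨a, b, discr_eq, ⟨e⟩⟩ := exists_quadraticAlgebra_algEquiv_ringOfIntegers deg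
  rw [← discr_eq] at h
  simpa using (MulEquiv.prime_iff e).mpr (prime_natCast_of_not_isSquare_discr hp h)

theorem isIntegral_of_sq_eq_add_intCast {A : Type*} [CommRing A] {x : A} {k : ℤ}
    (h : x ^ 2 = x + k) : IsIntegral ℤ x :=
  ⟨X ^ 2 - X - C k, by monicity!, by simp [h, -eq_intCast]⟩

theorem discr_emod_four_eq_zero_or_one (deg : Module.finrank ℚ K = 2) :
    discr K % 4 = 0 ∨ discr K % 4 = 1 := by
  obtain ⟨a, b, discr_eq, -⟩ := exists_quadraticAlgebra_algEquiv_ringOfIntegers deg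
  rw [← discr_eq]
  obtain ⟨k, rfl | rfl⟩ := b.even_or_odd'
  all_goals ring_nf; omega

theorem exists_discr_mul_sq_eq (deg : Module.finrank ℚ K = 2) {d : ℤ} (not_isSquare : ¬IsSquare d)
    {s : K} (hs : s ^ 2 = d) : ∃ n, discr K * n ^ 2 = 4 * d ∧ (d % 4 = 1 → Even n) := by
  obtain ⟨a, b, discr_eq, ⟨e⟩⟩ := exists_quadraticAlgebra_algEquiv_ringOfIntegers deg
  have exists_eq {x : K} (hx : IsIntegral ℤ x) : ∃ z, algebraMap (𝓞 K) K (e z) = x :=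
    ⟨e.symm ⟨x, hx⟩, congrArg (algebraMap (𝓞 K) K) (e.apply_symm_apply ⟨x, hx⟩)⟩
  obtain ⟨z, rfl⟩ := exists_eq (.of_pow two_pos (hs ▸ isIntegral_intCast d))
  have z_sq : z ^ 2 = d := e.injective (RingOfIntegers.ext (by simpa using hs))
  have re_eq : z.re ^ 2 + a * z.im ^ 2 = d := by
    simpa [sq, mul_assoc] using congr(re $z_sq)
  have im_eq : z.im * (2 * z.re + b * z.im) = 0 := by
    have := congr(im $z_sq)
    simp only [sq, im_mul, im_intCast] at this
    linear_combination this
  have im_ne_zero : z.im ≠ 0 := fun im_eq_zero ↦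
    not_isSquare ⟨z.re, by linear_combination -re_eq + a * z.im * im_eq_zero⟩
  have trace_eq_zero := (mul_eq_zero.mp im_eq).resolve_left im_ne_zero
  refine ⟨z.im, ?_, fun d_mod ↦ ?_⟩
  · rw [← discr_eq]
    linear_combination 4 * re_eq + (b * z.im - 2 * z.re) * trace_eq_zero
  · obtain ⟨k, rfl⟩ : ∃ k, d = 4 * k + 1 := ⟨d / 4, by omega⟩
    obtain ⟨w, hw⟩ := exists_eq (x := (1 + algebraMap (𝓞 K) K (e z)) / 2)
      (isIntegral_of_sq_eq_add_intCast (k := k) (by push_cast at hs; linear_combination hs / 4))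
    have two_mul_w : 2 * w = 1 + z := e.injective (RingOfIntegers.ext (by
      simp only [map_mul, map_add, map_one, map_ofNat, hw]; ring))
    exact ⟨w.im, by simpa [← two_mul, eq_comm] using congr(im $two_mul_w)⟩

theorem discr_eq_ite_of_sq_eq_intCast (deg : Module.finrank ℚ K = 2) {d : ℤ}
    (squarefree : Squarefree d) (ne_one : d ≠ 1) {s : K} (hs : s ^ 2 = d) :
    discr K = if d % 4 = 1 then d else 4 * d := by
  have sq_eq_one {k : ℤ} (h : k ^ 2 ∣ d) : k ^ 2 = 1 :=
    Int.isUnit_sq (squarefree k (sq k ▸ h))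
  have not_isSquare : ¬IsSquare d := by
    rintro ⟨k, rfl⟩
    exact ne_one (by rw [← sq, sq_eq_one (by rw [sq])])
  obtain ⟨n, hn, even_of_mod⟩ := exists_discr_mul_sq_eq deg not_isSquare hs
  obtain ⟨k, rfl | rfl⟩ := n.even_or_odd'
  · have discr_mul_sq : discr K * k ^ 2 = d := by linarith
    have discr_eq : discr K = d := by
      rw [← discr_mul_sq, sq_eq_one (Dvd.intro_left _ discr_mul_sq), mul_one]
    have d_mod_ne : d % 4 ≠ 0 := fun h ↦ by
      simpa using sq_eq_one (k := 2) (Int.dvd_of_emod_eq_zero h)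
    have := discr_emod_four_eq_zero_or_one deg
    rw [if_pos (by omega), discr_eq]
  · have coprime : IsCoprime ((2 * k + 1) ^ 2) (4 : ℤ) :=
      ⟨1, -(k ^ 2 + k), by ring⟩
    rw [if_neg fun h ↦ Int.not_even_two_mul_add_one k (even_of_mod h), ← hn,
      sq_eq_one (coprime.dvd_of_dvd_mul_left (Dvd.intro_left _ hn)), mul_one]

open InfinitePlace in
theorem nrComplexPlaces_eq_one_of_discr_neg (deg : Module.finrank ℚ K = 2) (neg : discr K < 0) :
    nrComplexPlaces K = 1 := by
  have le_one : nrComplexPlaces K ≤ 1 := by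
    have := card_add_two_mul_card_eq_rank K
    omega
  have ne_zero : nrComplexPlaces K ≠ 0 := by
    intro eq_zero
    have := sign_discr K
    rw [eq_zero, Int.sign_eq_neg_one_of_neg neg] at this
    norm_num at this
  omega

-- Minkowski's bound `p ≤ (2 / π) √|discr K|` with `π` replaced by `3` is `9p² ≤ 4|discr K|`.
theorem isPrincipalIdealRing_of_forall_prime (deg : Module.finrank ℚ K = 2) (neg : discr K < 0)
    (prime : ∀ p : ℕ, p.Prime → 9 * p ^ 2 ≤ 4 * |discr K| → Prime (p : 𝓞 K)) :
    IsPrincipalIdealRing (𝓞 K) := by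
  refine RingOfIntegers.isPrincipalIdealRing_of_isPrincipal_of_pow_le_of_mem_primesOver_of_mem_Icc
    fun p hp_mem hp P ⟨P_isPrime, P_liesOver⟩ _ ↦ ?_
  rw [nrComplexPlaces_eq_one_of_discr_neg deg neg, deg] at hp_mem
  have sq_le : 9 * (p : ℤ) ^ 2 ≤ 4 * |discr K| := by
    obtain ⟨-, le_floor⟩ := Finset.mem_Icc.mp hp_mem
    rw [Nat.le_floor_iff' hp.ne_zero] at le_floor
    have le_sqrt : (p : ℝ) ≤ 2 / 3 * √|(discr K : ℝ)| := by
      have : 4 / Real.pi ≤ 4 / 3 := by gcongr; exact Real.pi_gt_three.le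
      calc
        (p : ℝ) ≤ (4 / Real.pi) ^ 1 * (↑(Nat.factorial 2) / ↑2 ^ 2 * √|(discr K : ℝ)|) := le_floor
        _ = 4 / Real.pi * (√|(discr K : ℝ)| / 2) := by rw [Nat.factorial_two]; push_cast; ring
        _ ≤ 4 / 3 * (√|(discr K : ℝ)| / 2) := by gcongr
        _ = 2 / 3 * √|(discr K : ℝ)| := by ring
    have : (9 : ℝ) * p ^ 2 ≤ 4 * |(discr K : ℝ)| := by
      calc (9 : ℝ) * p ^ 2 ≤ 9 * (2 / 3 * √|(discr K : ℝ)|) ^ 2 := by gcongr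
        _ = 4 * |(discr K : ℝ)| := by rw [mul_pow, Real.sq_sqrt (abs_nonneg _)]; ring
    exact_mod_cast this
  have prime_p := prime p hp sq_le
  have isMaximal : (Ideal.span {(p : 𝓞 K)}).IsMaximal :=
    ((Ideal.span_singleton_prime prime_p.ne_zero).mpr prime_p).isMaximal
      (by simpa using prime_p.ne_zero)
  have mem : (p : 𝓞 K) ∈ P := by
    have : (p : ℤ) ∈ P.under ℤ := P_liesOver.over ▸ Ideal.mem_span_singleton_self _
    simpa using this
  exact ⟨p, (isMaximal.eq_of_le P_isPrime.ne_top (by simpa)).symm⟩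

theorem isPrincipalIdealRing_of_discr_mem (deg : Module.finrank ℚ K = 2)
    (mem : discr K ∈ ({-4, -8, -7, -11, -19, -43, -67, -163} : Finset ℤ)) :
    IsPrincipalIdealRing (𝓞 K) := by
  have bounds : -163 ≤ discr K ∧ discr K < 0 := by
    simp only [Finset.mem_insert, Finset.mem_singleton] at mem
    omega
  refine isPrincipalIdealRing_of_forall_prime deg bounds.2 fun p hp sq_le ↦
    prime_natCast_ringOfIntegers_of_not_isSquare_discr deg hp ?_
  have p_lt : p < 9 := by
    rw [abs_of_neg bounds.2] at sq_le
    nlinarith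
  have two_le := hp.two_le
  clear bounds
  generalize discr K = D at *
  revert hp D
  interval_cases p <;> decide

theorem discr_mem_of_sq_eq_neg (deg : Module.finrank ℚ K = 2) {d : ℕ}
    (mem : d ∈ ({1, 2, 7, 11, 19, 43, 67, 163} : Finset ℕ)) {s : K} (hs : s ^ 2 = -(d : K)) :
    discr K ∈ ({-4, -8, -7, -11, -19, -43, -67, -163} : Finset ℤ) := by
  have squarefree : Squarefree (-d : ℤ) := by
    obtain rfl | prime : d = 1 ∨ d.Prime := by fin_cases mem <;> norm_num
    exacts [isUnit_one.neg.squarefree, (Nat.prime_iff_prime_int.mp prime).neg.squarefree]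
  rw [discr_eq_ite_of_sq_eq_intCast deg squarefree (by omega) (by simpa using hs)]
  fin_cases mem <;> decide

end ClassNumberOne

theorem exists_sq_eq_neg_prime_of_isUnramifiedAwayFrom {K L : Type*} [Field K]
    [NumberField K] [IsPrincipalIdealRing (𝓞 K)] [Field L] [NumberField L] [Algebra K L]
    (deg_K : Module.finrank ℚ K = 2) (discr_neg : discr K < 0) (discr_ne : discr K ≠ -3)
    (deg : Module.finrank K L = 2) {q : ℕ} (hq : q.Prime) (q_mod : q % 4 = 3)
    (unramified : IsUnramifiedAwayFrom (𝓞 K) (𝓞 L) (q : 𝓞 K)) :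
    ∃ ρ : L, ρ ^ 2 = -q ∧ ρ ∉ Set.range (algebraMap K L) := by
  have coprime : IsCoprime (2 : 𝓞 K) q :=
    mod_cast Nat.Coprime.cast (Nat.coprime_two_left.mpr (Nat.odd_iff.mpr (by lia)))
  obtain ⟨x, r, r_sq, r_notMem, dvd, isSquareMod⟩ :=
    exists_sqrt_dvd_of_isUnramifiedAwayFrom deg coprime unramified
  obtain ⟨v, rfl⟩ | ⟨v, rfl⟩ := isSquare_or_exists_eq_neg_mul_sq_ringOfIntegers deg_K discr_neg
    discr_ne hq q_mod dvd isSquareMod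
  · refine absurd ?_ r_notMem
    obtain h | h : r = algebraMap K L v ∨ r = -algebraMap K L v := by
      rw [← sq_eq_sq_iff_eq_or_eq_neg, r_sq, ← map_pow, ← map_pow, sq]
    exacts [⟨v, h.symm⟩, ⟨-v, by rw [map_neg, h]⟩]
  · have v_ne_zero : algebraMap K L v ≠ 0 := by
      intro v_eq_zero
      have r_eq_zero : r = 0 := by simpa [v_eq_zero] using r_sq
      exact r_notMem ⟨0, by rw [r_eq_zero, map_zero]⟩
    refine ⟨r / algebraMap K L v, ?_, ?_⟩
    · rw [div_pow, r_sq, div_eq_iff (pow_ne_zero 2 v_ne_zero)]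
      simp
    · rintro ⟨z, hz⟩
      exact r_notMem ⟨z * v, by rw [map_mul, hz, div_mul_cancel₀ _ v_ne_zero]⟩

theorem quadratic_extension_unramified_outside_three_is_K_zeta3_general {K L : Type*} [Field K]
    [NumberField K] [IsPrincipalIdealRing (𝓞 K)] [Field L] [NumberField L] [Algebra K L]
    (deg_K : Module.finrank ℚ K = 2) (discr_neg : discr K < 0) (discr_ne : discr K ≠ -3)
    (deg : Module.finrank K L = 2) {q : ℕ} (hq : q.Prime) (q_mod : q % 4 = 3)
    (unramified : IsUnramifiedAwayFrom (𝓞 K) (𝓞 L) (q : 𝓞 K)) :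
    Nonempty (L ≃ₐ[K] AdjoinRoot ((X : K[X]) ^ 2 + C (q : K))) := by
  obtain ⟨ρ, ρ_sq, ρ_notMem⟩ := exists_sq_eq_neg_prime_of_isUnramifiedAwayFrom deg_K discr_neg
    discr_ne deg hq q_mod unramified
  exact nonempty_algEquiv_adjoinRoot_X_sq_add_C deg (by simpa using ρ_sq) ρ_notMem

/-- For `d ∈ {1, 2, 7, 11, 19, 43, 67, 163}` and `K = ℚ(√-d)`, every quadratic extension
`L/K` unramified at every prime of `O_K` not dividing `3` is `K`-isomorphic to
`K(√-3) = K(ζ₃)`, the field obtained by adjoining a root of `x² + 3`. -/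
theorem quadratic_extension_unramified_outside_three_is_K_zeta3
    (d : ℕ) (hd : d ∈ ({1, 2, 7, 11, 19, 43, 67, 163} : Finset ℕ))
    (K : Type) [Field K] [NumberField K]
    (s : K) (hs : s ^ 2 = -(d : K)) (hK : Module.finrank ℚ K = 2)
    (L : Type) [Field L] [Algebra K L] [NumberField L]
    (hdeg : Module.finrank K L = 2)
    (hunr : ∀ P : Ideal (𝓞 K), P.IsPrime → P ≠ ⊥ → (3 : 𝓞 K) ∉ P →
      ∀ Q : Ideal (𝓞 L), Q.IsPrime → Q.comap (algebraMap (𝓞 K) (𝓞 L)) = P →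
        Ideal.ramificationIdx' P Q = 1) :
    Nonempty (L ≃ₐ[K] AdjoinRoot ((X : K[X]) ^ 2 + 3)) := by
  have discr_mem := discr_mem_of_sq_eq_neg hK hd hs
  have := isPrincipalIdealRing_of_discr_mem hK discr_mem
  simp only [Finset.mem_insert, Finset.mem_singleton] at discr_mem
  exact quadratic_extension_unramified_outside_three_is_K_zeta3_general hK (by omega) (by omega)
    hdeg Nat.prime_three rfl (mod_cast hunr)
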